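/- For every NPLTS (S, A, →) and all states s1, s2 ∈ S, the following chain of inclusions holds among the equivalences that consider a single decorated trace at a time: s1 ≈_{PFTr} s2 implies s1 ≈_{PF} s2, which implies s1 ≈_{PCTr} s2, which implies s1 ≈_{PTr} s2. -/

import Mathlib

open scoped ENNReal
open Classical

noncomputable section

/-- Infimum of a set of values in `ℝ≥0∞`, taken to be `0` when the set is empty
(matching the paper's convention for `⊓` over an empty set). -/
def inf0 (X : Set ℝ≥0∞) : ℝ≥0∞ := if X = ∅ then 0 else sInf X

/-- Probability mass that a discrete distribution assigns to a set of states. -/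
def pmfMass {S : Type} (D : PMF S) (G : Set S) : ℝ≥0∞ := ∑' x : G, D x

/-- A nondeterministic and probabilistic labeled transition system (NPLTS):
a transition relation `→ ⊆ S × A × Distr(S)`, with `Distr(S)` the discrete
probability distributions over `S` (formalized as `PMF S`). -/
structure NPLTS (S A : Type) where
  trans : S → A → PMF S → Prop

namespace NPLTS

variable {S A : Type}

/-- The set of actions enabled at a state. -/
def enabled (L : NPLTS S A) (s : S) : Set A := {a | ∃ D, L.trans s a D}

/-- `s` has at least one outgoing transition. -/
def hasTrans (L : NPLTS S A) (s : S) : Prop := ∃ a D, L.trans s a D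

/-- A finite computation from `s`, recorded as the list of its steps
(action, target state): each step must come from some transition whose
distribution gives the target state positive probability. -/
def IsComp (L : NPLTS S A) : S → List (A × S) → Prop
  | _, [] => True
  | s, (a, s') :: c => (∃ D, L.trans s a D ∧ s' ∈ D.support) ∧ L.IsComp s' c

/-- The probability of a computation: the product of the step probabilities.
(In a fully probabilistic NPLTS, such as a resolution, the chosen transition
at each state is unique, so the supremum below selects its probability.) -/
def compProb (L : NPLTS S A) : S → List (A × S) → ℝ≥0∞
  | _, [] => 1
  | s, (a, s') :: c => (⨆ (D : PMF S) (_ : L.trans s a D), D s') * L.compProb s' c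

/-- The probability of a set of computations from `s`. -/
def probSet (L : NPLTS S A) (s : S) (C : Set (List (A × S))) : ℝ≥0∞ :=
  ∑' c : C, L.compProb s (c : List (A × S))

/-- Each state has finitely many outgoing transitions. -/
def FinitelyBranching (L : NPLTS S A) : Prop :=
  ∀ s : S, {p : A × PMF S | L.trans s p.1 p.2}.Finite

/-- Every transition concentrates all the probability mass in a single state. -/
def FullyNondeterministic (L : NPLTS S A) : Prop :=
  ∀ s a D, L.trans s a D → ∃ s', D = PMF.pure s'

/-- Every state has at most one outgoing transition. -/
def FullyProbabilistic (L : NPLTS S A) : Prop :=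
  ∀ (s : S) a₁ D₁ a₂ D₂, L.trans s a₁ D₁ → L.trans s a₂ D₂ → a₁ = a₂ ∧ D₁ = D₂

/-- Fully synchronous parallel composition of two NPLTSs over the same actions. -/
def par {S₁ S₂ : Type} (L₁ : NPLTS S₁ A) (L₂ : NPLTS S₂ A) : NPLTS (S₁ × S₂) A where
  trans p a D := ∃ D₁ D₂, L₁.trans p.1 a D₁ ∧ L₂.trans p.2 a D₂ ∧
    ∀ q : S₁ × S₂, D q = D₁ q.1 * D₂ q.2

end NPLTS

/-- The final state of a computation starting at `s`. -/
def lastState {S A : Type} : S → List (A × S) → S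
  | s, [] => s
  | _, (_, s') :: c => lastState s' c

/-- The trace (sequence of actions) of a computation. -/
def traceOf {S A : Type} (c : List (A × S)) : List A := c.map Prod.fst

/-- Stepwise compatibility of a computation with a decorated trace: the actions
match and after each step the (corresponding) reached state satisfies `P`
with respect to the decoration. -/
def decoComp {S A Z : Type} (P : S → Set A → Prop) (corr : Z → S) :
    List (A × Z) → List (A × Set A) → Prop
  | [], [] => True
  | (a, z) :: c, (b, X) :: φ => a = b ∧ P (corr z) X ∧ decoComp P corr c φ
  | _, _ => False

/-- A resolution of `s` obtained via a deterministic scheduler: a fully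
probabilistic NPLTS together with a correspondence function to the states of
the original NPLTS. -/
structure Resolution {S A : Type} (L : NPLTS S A) (s : S) where
  State : Type
  countable : Countable State
  lts : NPLTS State A
  corr : State → S
  init : State
  corr_init : corr init = s
  mimic : ∀ z a D, lts.trans z a D →
    ∃ D', L.trans (corr z) a D' ∧ ∀ z', D z' = D' (corr z')
  det : ∀ z a₁ a₂ D₁ D₂, lts.trans z a₁ D₁ → lts.trans z a₂ D₂ → a₁ = a₂ ∧ D₁ = D₂

namespace Resolution

variable {S A : Type} {L : NPLTS S A} {s : S}

/-- Probability of a set of computations of the resolution from its initial state. -/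
def prob (R : Resolution L s) (C : Set (List (A × R.State))) : ℝ≥0∞ :=
  R.lts.probSet R.init C

/-- `CC(z_s, α)`: the α-compatible computations from the initial state. -/
def cc (R : Resolution L s) (α : List A) : Set (List (A × R.State)) :=
  {c | R.lts.IsComp R.init c ∧ traceOf c = α}

/-- `CCC(z_s, α)`: the completed α-compatible computations (the corresponding
final state has no outgoing transitions in the original NPLTS). -/
def ccc (R : Resolution L s) (α : List A) : Set (List (A × R.State)) :=
  {c | c ∈ R.cc α ∧ ¬ L.hasTrans (R.corr (lastState R.init c))}

/-- `FCC(z_s, (α, F))`: α-compatible computations whose corresponding final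
state enables no action of the failure set `F`. -/
def fcc (R : Resolution L s) (α : List A) (F : Set A) : Set (List (A × R.State)) :=
  {c | c ∈ R.cc α ∧ ∀ f ∈ F, f ∉ L.enabled (R.corr (lastState R.init c))}

/-- `RCC(z_s, (α, Rd))`: α-compatible computations whose corresponding final
state enables exactly the ready set `Rd`. -/
def rcc (R : Resolution L s) (α : List A) (Rd : Set A) : Set (List (A × R.State)) :=
  {c | c ∈ R.cc α ∧ L.enabled (R.corr (lastState R.init c)) = Rd}

/-- `FTCC(z_s, φ)`: computations compatible with the failure trace `φ`. -/
def ftcc (R : Resolution L s) (φ : List (A × Set A)) : Set (List (A × R.State)) :=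
  {c | R.lts.IsComp R.init c ∧
    decoComp (fun t F => ∀ f ∈ F, f ∉ L.enabled t) R.corr c φ}

/-- `RTCC(z_s, ρ)`: computations compatible with the ready trace `ρ`. -/
def rtcc (R : Resolution L s) (ρ : List (A × Set A)) : Set (List (A × R.State)) :=
  {c | R.lts.IsComp R.init c ∧ decoComp (fun t X => L.enabled t = X) R.corr c ρ}

/-- `R ∈ Res_α(s)`: the resolution has no (maximal) computation corresponding
to a proper prefix of an α-compatible computation of the original NPLTS. -/
def InResAlpha (R : Resolution L s) (α : List A) : Prop :=
  ¬ ∃ c : List (A × R.State), R.lts.IsComp R.init c ∧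
      ¬ R.lts.hasTrans (lastState R.init c) ∧
      ∃ c' : List (A × S), L.IsComp s c' ∧ traceOf c' = α ∧
        (c.map fun p => (p.1, R.corr p.2)) <+: c' ∧ c.length < c'.length

/-- A state of the resolution reachable from its initial state. -/
def reachable (R : Resolution L s) (z : R.State) : Prop :=
  ∃ c, R.lts.IsComp R.init c ∧ lastState R.init c = z

/-- A maximal resolution: it cannot be further extended, i.e. every reachable
state whose corresponding state has an outgoing transition has one too. -/
def Maximal (R : Resolution L s) : Prop :=
  ∀ z, R.reachable z → L.hasTrans (R.corr z) → R.lts.hasTrans z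

/-- `SC(z_{s,o})`: successful computations of a resolution of a configuration
of an interaction system (the test component of the final configuration is
the success state `ω`). -/
def sc {S O : Type} {I : NPLTS (S × O) A} {cfg : S × O}
    (R : Resolution I cfg) (ω : O) : Set (List (A × R.State)) :=
  {c | R.lts.IsComp R.init c ∧ (R.corr (lastState R.init c)).2 = ω}

/-- `SCC(z_{s,o}, α)`: successful α-compatible computations. -/
def scc {S O : Type} {I : NPLTS (S × O) A} {cfg : S × O}
    (R : Resolution I cfg) (ω : O) (α : List A) : Set (List (A × R.State)) :=
  {c | (R.lts.IsComp R.init c ∧ (R.corr (lastState R.init c)).2 = ω) ∧ traceOf c = α}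

end Resolution

section Equivalences

variable {S A : Type} (L : NPLTS S A)

/-! ### Trace-based equivalences -/

/-- Probabilistic trace-distribution equivalence `≈_{PTr,dis}`. -/
def PTrDis (s₁ s₂ : S) : Prop :=
  (∀ R₁ : Resolution L s₁, ∃ R₂ : Resolution L s₂,
    ∀ α : List A, R₁.prob (R₁.cc α) = R₂.prob (R₂.cc α)) ∧
  (∀ R₂ : Resolution L s₂, ∃ R₁ : Resolution L s₁,
    ∀ α : List A, R₂.prob (R₂.cc α) = R₁.prob (R₁.cc α))

/-- Probabilistic trace equivalence `≈_{PTr}`. -/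
def PTr (s₁ s₂ : S) : Prop :=
  ∀ α : List A,
    (∀ R₁ : Resolution L s₁, ∃ R₂ : Resolution L s₂,
      R₁.prob (R₁.cc α) = R₂.prob (R₂.cc α)) ∧
    (∀ R₂ : Resolution L s₂, ∃ R₁ : Resolution L s₁,
      R₂.prob (R₂.cc α) = R₁.prob (R₁.cc α))

/-- The set of values `prob(CC(z_s, α))` over the resolutions in `Res_α(s)`. -/
def ccVals (s : S) (α : List A) : Set ℝ≥0∞ :=
  {p | ∃ R : Resolution L s, R.InResAlpha α ∧ p = R.prob (R.cc α)}

/-- Probabilistic ⊔⊓-trace equivalence `≈_{PTr,⊔⊓}`. -/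
def PTrSupInf (s₁ s₂ : S) : Prop :=
  ∀ α : List A,
    sSup (ccVals L s₁ α) = sSup (ccVals L s₂ α) ∧
    inf0 (ccVals L s₁ α) = inf0 (ccVals L s₂ α)

/-- Probabilistic completed-trace-distribution equivalence `≈_{PCTr,dis}`. -/
def PCTrDis (s₁ s₂ : S) : Prop :=
  (∀ R₁ : Resolution L s₁, ∃ R₂ R₂' : Resolution L s₂, ∀ α : List A,
    R₁.prob (R₁.cc α) = R₂.prob (R₂.cc α) ∧
    R₁.prob (R₁.ccc α) = R₂'.prob (R₂'.ccc α)) ∧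
  (∀ R₂ : Resolution L s₂, ∃ R₁ R₁' : Resolution L s₁, ∀ α : List A,
    R₂.prob (R₂.cc α) = R₁.prob (R₁.cc α) ∧
    R₂.prob (R₂.ccc α) = R₁'.prob (R₁'.ccc α))

/-- Probabilistic completed-trace equivalence `≈_{PCTr}`. -/
def PCTr (s₁ s₂ : S) : Prop :=
  ∀ α : List A,
    (∀ R₁ : Resolution L s₁, ∃ R₂ R₂' : Resolution L s₂,
      R₁.prob (R₁.cc α) = R₂.prob (R₂.cc α) ∧
      R₁.prob (R₁.ccc α) = R₂'.prob (R₂'.ccc α)) ∧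
    (∀ R₂ : Resolution L s₂, ∃ R₁ R₁' : Resolution L s₁,
      R₂.prob (R₂.cc α) = R₁.prob (R₁.cc α) ∧
      R₂.prob (R₂.ccc α) = R₁'.prob (R₁'.ccc α))

/-- The set of values `prob(CCC(z_s, α))` over the resolutions in `Res_α(s)`. -/
def cccVals (s : S) (α : List A) : Set ℝ≥0∞ :=
  {p | ∃ R : Resolution L s, R.InResAlpha α ∧ p = R.prob (R.ccc α)}

/-- Probabilistic ⊔⊓-completed-trace equivalence `≈_{PCTr,⊔⊓}`. -/
def PCTrSupInf (s₁ s₂ : S) : Prop :=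
  ∀ α : List A,
    (sSup (ccVals L s₁ α) = sSup (ccVals L s₂ α) ∧
     inf0 (ccVals L s₁ α) = inf0 (ccVals L s₂ α)) ∧
    (sSup (cccVals L s₁ α) = sSup (cccVals L s₂ α) ∧
     inf0 (cccVals L s₁ α) = inf0 (cccVals L s₂ α))

/-- Probabilistic failure-distribution equivalence `≈_{PF,dis}`. -/
def PFDis (s₁ s₂ : S) : Prop :=
  (∀ R₁ : Resolution L s₁, ∃ R₂ : Resolution L s₂, ∀ (α : List A) (F : Set A),
    R₁.prob (R₁.fcc α F) = R₂.prob (R₂.fcc α F)) ∧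
  (∀ R₂ : Resolution L s₂, ∃ R₁ : Resolution L s₁, ∀ (α : List A) (F : Set A),
    R₂.prob (R₂.fcc α F) = R₁.prob (R₁.fcc α F))

/-- Probabilistic failure equivalence `≈_{PF}`. -/
def PF (s₁ s₂ : S) : Prop :=
  ∀ (α : List A) (F : Set A),
    (∀ R₁ : Resolution L s₁, ∃ R₂ : Resolution L s₂,
      R₁.prob (R₁.fcc α F) = R₂.prob (R₂.fcc α F)) ∧
    (∀ R₂ : Resolution L s₂, ∃ R₁ : Resolution L s₁,
      R₂.prob (R₂.fcc α F) = R₁.prob (R₁.fcc α F))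

/-- The set of values `prob(FCC(z_s, (α, F)))` over the resolutions in `Res_α(s)`. -/
def fccVals (s : S) (α : List A) (F : Set A) : Set ℝ≥0∞ :=
  {p | ∃ R : Resolution L s, R.InResAlpha α ∧ p = R.prob (R.fcc α F)}

/-- Probabilistic ⊔⊓-failure equivalence `≈_{PF,⊔⊓}`. -/
def PFSupInf (s₁ s₂ : S) : Prop :=
  ∀ (α : List A) (F : Set A),
    sSup (fccVals L s₁ α F) = sSup (fccVals L s₂ α F) ∧
    inf0 (fccVals L s₁ α F) = inf0 (fccVals L s₂ α F)

/-- Probabilistic failure-trace-distribution equivalence `≈_{PFTr,dis}`. -/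
def PFTrDis (s₁ s₂ : S) : Prop :=
  (∀ R₁ : Resolution L s₁, ∃ R₂ : Resolution L s₂, ∀ φ : List (A × Set A),
    R₁.prob (R₁.ftcc φ) = R₂.prob (R₂.ftcc φ)) ∧
  (∀ R₂ : Resolution L s₂, ∃ R₁ : Resolution L s₁, ∀ φ : List (A × Set A),
    R₂.prob (R₂.ftcc φ) = R₁.prob (R₁.ftcc φ))

/-- Probabilistic failure-trace equivalence `≈_{PFTr}`. -/
def PFTr (s₁ s₂ : S) : Prop :=
  ∀ φ : List (A × Set A),
    (∀ R₁ : Resolution L s₁, ∃ R₂ : Resolution L s₂,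
      R₁.prob (R₁.ftcc φ) = R₂.prob (R₂.ftcc φ)) ∧
    (∀ R₂ : Resolution L s₂, ∃ R₁ : Resolution L s₁,
      R₂.prob (R₂.ftcc φ) = R₁.prob (R₁.ftcc φ))

/-- The set of values `prob(FTCC(z_s, φ))` over the resolutions in
`Res_{a₁…aₙ}(s)`, where `a₁…aₙ` is the trace underlying `φ`. -/
def ftccVals (s : S) (φ : List (A × Set A)) : Set ℝ≥0∞ :=
  {p | ∃ R : Resolution L s, R.InResAlpha (φ.map Prod.fst) ∧ p = R.prob (R.ftcc φ)}

/-- Probabilistic ⊔⊓-failure-trace equivalence `≈_{PFTr,⊔⊓}`. -/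
def PFTrSupInf (s₁ s₂ : S) : Prop :=
  ∀ φ : List (A × Set A),
    sSup (ftccVals L s₁ φ) = sSup (ftccVals L s₂ φ) ∧
    inf0 (ftccVals L s₁ φ) = inf0 (ftccVals L s₂ φ)

/-- Probabilistic readiness-distribution equivalence `≈_{PR,dis}`. -/
def PRDis (s₁ s₂ : S) : Prop :=
  (∀ R₁ : Resolution L s₁, ∃ R₂ : Resolution L s₂, ∀ (α : List A) (Rd : Set A),
    R₁.prob (R₁.rcc α Rd) = R₂.prob (R₂.rcc α Rd)) ∧
  (∀ R₂ : Resolution L s₂, ∃ R₁ : Resolution L s₁, ∀ (α : List A) (Rd : Set A),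
    R₂.prob (R₂.rcc α Rd) = R₁.prob (R₁.rcc α Rd))

/-- Probabilistic readiness equivalence `≈_{PR}`. -/
def PR (s₁ s₂ : S) : Prop :=
  ∀ (α : List A) (Rd : Set A),
    (∀ R₁ : Resolution L s₁, ∃ R₂ : Resolution L s₂,
      R₁.prob (R₁.rcc α Rd) = R₂.prob (R₂.rcc α Rd)) ∧
    (∀ R₂ : Resolution L s₂, ∃ R₁ : Resolution L s₁,
      R₂.prob (R₂.rcc α Rd) = R₁.prob (R₁.rcc α Rd))

/-- The set of values `prob(RCC(z_s, (α, Rd)))` over the resolutions in `Res_α(s)`. -/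
def rccVals (s : S) (α : List A) (Rd : Set A) : Set ℝ≥0∞ :=
  {p | ∃ R : Resolution L s, R.InResAlpha α ∧ p = R.prob (R.rcc α Rd)}

/-- Probabilistic ⊔⊓-readiness equivalence `≈_{PR,⊔⊓}`. -/
def PRSupInf (s₁ s₂ : S) : Prop :=
  ∀ (α : List A) (Rd : Set A),
    sSup (rccVals L s₁ α Rd) = sSup (rccVals L s₂ α Rd) ∧
    inf0 (rccVals L s₁ α Rd) = inf0 (rccVals L s₂ α Rd)

/-- Probabilistic ready-trace-distribution equivalence `≈_{PRTr,dis}`. -/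
def PRTrDis (s₁ s₂ : S) : Prop :=
  (∀ R₁ : Resolution L s₁, ∃ R₂ : Resolution L s₂, ∀ ρ : List (A × Set A),
    R₁.prob (R₁.rtcc ρ) = R₂.prob (R₂.rtcc ρ)) ∧
  (∀ R₂ : Resolution L s₂, ∃ R₁ : Resolution L s₁, ∀ ρ : List (A × Set A),
    R₂.prob (R₂.rtcc ρ) = R₁.prob (R₁.rtcc ρ))

/-- Probabilistic ready-trace equivalence `≈_{PRTr}`. -/
def PRTr (s₁ s₂ : S) : Prop :=
  ∀ ρ : List (A × Set A),
    (∀ R₁ : Resolution L s₁, ∃ R₂ : Resolution L s₂,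
      R₁.prob (R₁.rtcc ρ) = R₂.prob (R₂.rtcc ρ)) ∧
    (∀ R₂ : Resolution L s₂, ∃ R₁ : Resolution L s₁,
      R₂.prob (R₂.rtcc ρ) = R₁.prob (R₁.rtcc ρ))

/-- The set of values `prob(RTCC(z_s, ρ))` over the resolutions in
`Res_{a₁…aₙ}(s)`, where `a₁…aₙ` is the trace underlying `ρ`. -/
def rtccVals (s : S) (ρ : List (A × Set A)) : Set ℝ≥0∞ :=
  {p | ∃ R : Resolution L s, R.InResAlpha (ρ.map Prod.fst) ∧ p = R.prob (R.rtcc ρ)}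

/-- Probabilistic ⊔⊓-ready-trace equivalence `≈_{PRTr,⊔⊓}`. -/
def PRTrSupInf (s₁ s₂ : S) : Prop :=
  ∀ ρ : List (A × Set A),
    sSup (rtccVals L s₁ ρ) = sSup (rtccVals L s₂ ρ) ∧
    inf0 (rtccVals L s₁ ρ) = inf0 (rtccVals L s₂ ρ)

end Equivalences

/-! ### Tests and testing equivalences -/

/-- A nondeterministic and probabilistic test (NPT): a finite NPLTS (finitely
many states, finitely many outgoing transitions per state, acyclic) with a
distinguished success state `succ` having no outgoing transitions. -/
structure NPT (A : Type) where
  O : Type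
  lts : NPLTS O A
  succ : O
  fin : Finite O
  finTrans : ∀ o : O, {p : A × PMF O | lts.trans o p.1 p.2}.Finite
  acyclic : ∀ (o : O) (c : List (A × O)), lts.IsComp o c → c ≠ [] → lastState o c ≠ o
  succ_stop : ∀ a D, ¬ lts.trans succ a D

section Testing

variable {S A : Type} (L : NPLTS S A)

/-- The set of success probabilities over the maximal resolutions of the
configuration `(s, o)` of the interaction system of `L` and `T`. -/
def scVals (T : NPT A) (s : S) (o : T.O) : Set ℝ≥0∞ :=
  {p | ∃ R : Resolution (L.par T.lts) (s, o), R.Maximal ∧ p = R.prob (R.sc T.succ)}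

/-- Probabilistic ⊔⊓-testing equivalence `≈_{PTe-⊔⊓}`. -/
def PTeSupInf (s₁ s₂ : S) : Prop :=
  ∀ (T : NPT A) (o : T.O),
    sSup (scVals L T s₁ o) = sSup (scVals L T s₂ o) ∧
    inf0 (scVals L T s₁ o) = inf0 (scVals L T s₂ o)

/-- Probabilistic ∀∃-testing equivalence `≈_{PTe-∀∃}`. -/
def PTeAE (s₁ s₂ : S) : Prop :=
  ∀ (T : NPT A) (o : T.O),
    (∀ R₁ : Resolution (L.par T.lts) (s₁, o), R₁.Maximal →
      ∃ R₂ : Resolution (L.par T.lts) (s₂, o), R₂.Maximal ∧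
        R₁.prob (R₁.sc T.succ) = R₂.prob (R₂.sc T.succ)) ∧
    (∀ R₂ : Resolution (L.par T.lts) (s₂, o), R₂.Maximal →
      ∃ R₁ : Resolution (L.par T.lts) (s₁, o), R₁.Maximal ∧
        R₂.prob (R₂.sc T.succ) = R₁.prob (R₁.sc T.succ))

/-- Probabilistic trace-by-trace-distribution testing equivalence `≈_{PTe-tbt,dis}`. -/
def PTeTbtDis (s₁ s₂ : S) : Prop :=
  ∀ (T : NPT A) (o : T.O),
    (∀ R₁ : Resolution (L.par T.lts) (s₁, o), R₁.Maximal →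
      ∃ R₂ : Resolution (L.par T.lts) (s₂, o), R₂.Maximal ∧ ∀ α : List A,
        ((R₁.ccc α).Nonempty → (R₂.ccc α).Nonempty) ∧
        R₁.prob (R₁.scc T.succ α) = R₂.prob (R₂.scc T.succ α)) ∧
    (∀ R₂ : Resolution (L.par T.lts) (s₂, o), R₂.Maximal →
      ∃ R₁ : Resolution (L.par T.lts) (s₁, o), R₁.Maximal ∧ ∀ α : List A,
        ((R₂.ccc α).Nonempty → (R₁.ccc α).Nonempty) ∧
        R₂.prob (R₂.scc T.succ α) = R₁.prob (R₁.scc T.succ α))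

/-- Probabilistic trace-by-trace testing equivalence `≈_{PTe-tbt}`. -/
def PTeTbt (s₁ s₂ : S) : Prop :=
  ∀ (T : NPT A) (o : T.O) (α : List A),
    (∀ R₁ : Resolution (L.par T.lts) (s₁, o), R₁.Maximal → (R₁.ccc α).Nonempty →
      ∃ R₂ : Resolution (L.par T.lts) (s₂, o), R₂.Maximal ∧ (R₂.ccc α).Nonempty ∧
        R₁.prob (R₁.scc T.succ α) = R₂.prob (R₂.scc T.succ α)) ∧
    (∀ R₂ : Resolution (L.par T.lts) (s₂, o), R₂.Maximal → (R₂.ccc α).Nonempty →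
      ∃ R₁ : Resolution (L.par T.lts) (s₁, o), R₁.Maximal ∧ (R₁.ccc α).Nonempty ∧
        R₂.prob (R₂.scc T.succ α) = R₁.prob (R₁.scc T.succ α))

/-- The set of values `prob(SCC(z_{s,o}, α))` over `Res_{max,C,α}(s, o)`. -/
def sccVals (T : NPT A) (s : S) (o : T.O) (α : List A) : Set ℝ≥0∞ :=
  {p | ∃ R : Resolution (L.par T.lts) (s, o), R.Maximal ∧ (R.ccc α).Nonempty ∧
    p = R.prob (R.scc T.succ α)}

/-- Probabilistic ⊔⊓-trace-by-trace testing equivalence `≈_{PTe-tbt,⊔⊓}`. -/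
def PTeTbtSupInf (s₁ s₂ : S) : Prop :=
  ∀ (T : NPT A) (o : T.O) (α : List A),
    ((∃ R : Resolution (L.par T.lts) (s₁, o), R.Maximal ∧ (R.ccc α).Nonempty) ↔
     (∃ R : Resolution (L.par T.lts) (s₂, o), R.Maximal ∧ (R.ccc α).Nonempty)) ∧
    sSup (sccVals L T s₁ o α) = sSup (sccVals L T s₂ o α) ∧
    inf0 (sccVals L T s₁ o α) = inf0 (sccVals L T s₂ o α)

end Testing

/-! ### Bisimulation equivalences -/

section Bisimulations

variable {S A : Type} (L : NPLTS S A)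

/-- `G` is a union of equivalence classes of `B` (a "group of classes"). -/
def BClosed (B : S → S → Prop) (G : Set S) : Prop :=
  ∀ x y, B x y → x ∈ G → y ∈ G

/-- A probabilistic group-distribution bisimulation. -/
def IsPBDis (B : S → S → Prop) : Prop :=
  Equivalence B ∧ ∀ s₁ s₂, B s₁ s₂ → ∀ a D₁, L.trans s₁ a D₁ →
    ∃ D₂, L.trans s₂ a D₂ ∧ ∀ G : Set S, BClosed B G → pmfMass D₁ G = pmfMass D₂ G

/-- Probabilistic group-distribution bisimilarity `≈_{PB,dis}`. -/
def PBDis (s₁ s₂ : S) : Prop := ∃ B, IsPBDis L B ∧ B s₁ s₂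

/-- A probabilistic bisimulation (class groups considered one at a time). -/
def IsPB (B : S → S → Prop) : Prop :=
  Equivalence B ∧ ∀ s₁ s₂, B s₁ s₂ → ∀ G : Set S, BClosed B G →
    ∀ a D₁, L.trans s₁ a D₁ →
      ∃ D₂, L.trans s₂ a D₂ ∧ pmfMass D₁ G = pmfMass D₂ G

/-- Probabilistic bisimilarity `≈_{PB}`. -/
def PB (s₁ s₂ : S) : Prop := ∃ B, IsPB L B ∧ B s₁ s₂

/-- The set of values `D(∪G)` over the `a`-transitions of `s`. -/
def massVals (s : S) (a : A) (G : Set S) : Set ℝ≥0∞ :=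
  {p | ∃ D, L.trans s a D ∧ p = pmfMass D G}

/-- A probabilistic ⊔⊓-bisimulation. -/
def IsPBSupInf (B : S → S → Prop) : Prop :=
  Equivalence B ∧ ∀ s₁ s₂, B s₁ s₂ → ∀ G : Set S, BClosed B G → ∀ a : A,
    ((∃ D, L.trans s₁ a D) ↔ (∃ D, L.trans s₂ a D)) ∧
    sSup (massVals L s₁ a G) = sSup (massVals L s₂ a G) ∧
    inf0 (massVals L s₁ a G) = inf0 (massVals L s₂ a G)

/-- Probabilistic ⊔⊓-bisimilarity `≈_{PB,⊔⊓}`. -/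
def PBSupInf (s₁ s₂ : S) : Prop := ∃ B, IsPBSupInf L B ∧ B s₁ s₂

/-- Classical bisimilarity of the underlying LTS of a fully nondeterministic
NPLTS, where `s →a s'` means `s →a D` with `D(s') = 1`. -/
def BFnd (s₁ s₂ : S) : Prop :=
  ∃ B : S → S → Prop, Equivalence B ∧
    (∀ t₁ t₂, B t₁ t₂ → ∀ a t₁', (∃ D, L.trans t₁ a D ∧ D t₁' = 1) →
      ∃ t₂', (∃ D, L.trans t₂ a D ∧ D t₂' = 1) ∧ B t₁' t₂') ∧
    B s₁ s₂

end Bisimulations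

end

/-!
Traces, completed traces and failure pairs are special failure pairs or failure traces: with the
failure set `∅` a failure pair only records its trace, with the set of all actions it records that
the computation is completed, and a failure pair with a nonempty trace is a failure trace whose
failure sets are all empty but the last. The empty trace is the one exception, since a failure trace
says nothing about the initial state. There a failure pair has probability `0` or `1` depending only
on the initially enabled actions, and these are determined by the traces of length one: `a` is
enabled at `s` iff some resolution of `s` performs `a` with positive probability.
-/

theorem exists_pmf_subtype_of_support_subset {α : Type*} (p : PMF α) {T : Set α}
    (hT : p.support ⊆ T) : ∃ q : PMF T, ∀ x, q x = p x :=
  ⟨⟨fun x => p x, (hasSum_subtype_iff_of_support_subset hT).2 p.2⟩, fun _ => rfl⟩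

theorem NPLTS.IsComp.compProb_ne_zero {S A : Type} {L : NPLTS S A} {s : S} {c : List (A × S)}
    (hc : L.IsComp s c) : L.compProb s c ≠ 0 := by
  induction c generalizing s with
  | nil => exact one_ne_zero
  | cons step c ih =>
    obtain ⟨⟨D, hD, hmem⟩, hc⟩ := hc
    have step_le : D step.2 ≤ ⨆ (E : PMF S) (_ : L.trans s step.1 E), E step.2 :=
      le_iSup₂_of_le D hD le_rfl
    have step_pos : 0 < D step.2 := pos_iff_ne_zero.2 ((D.mem_support_iff _).1 hmem)
    exact mul_ne_zero (step_pos.trans_le step_le).ne' (ih hc)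

section DecoratedTraces

variable {S A Z : Type} {P : S → Set A → Prop} {corr : Z → S}

theorem decoComp_map_empty (hP : ∀ t, P t ∅) (c : List (A × Z)) (α : List A) :
    decoComp P corr c (α.map (·, ∅)) ↔ traceOf c = α := by
  induction α generalizing c with
  | nil => cases c <;> simp [decoComp, traceOf]
  | cons a α ih =>
    cases c with
    | nil => simp [decoComp, traceOf]
    | cons step c => simp [decoComp, traceOf, hP, ih c]

theorem decoComp_map_empty_append_singleton (hP : ∀ t, P t ∅) (z : Z) (c : List (A × Z))
    (α : List A) (a : A) (X : Set A) :
    decoComp P corr c (α.map (·, ∅) ++ [(a, X)]) ↔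
      traceOf c = α ++ [a] ∧ P (corr (lastState z c)) X := by
  induction α generalizing z c with
  | nil =>
    rcases c with _ | ⟨step, _ | ⟨step', c⟩⟩ <;> simp [decoComp, traceOf, lastState]
  | cons b α ih =>
    cases c with
    | nil => simp [decoComp, traceOf]
    | cons step c => simp [decoComp, traceOf, lastState, hP, ih step.2 c, and_assoc]

end DecoratedTraces

namespace Resolution

variable {S A : Type} {L : NPLTS S A} {s : S}

theorem ftcc_map_empty (R : Resolution L s) (α : List A) :
    R.ftcc (α.map (·, ∅)) = R.cc α := by
  ext c
  exact and_congr_right' (decoComp_map_empty (by simp) c α)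

theorem ftcc_map_empty_append_singleton (R : Resolution L s) (α : List A) (a : A) (F : Set A) :
    R.ftcc (α.map (·, ∅) ++ [(a, F)]) = R.fcc (α ++ [a]) F := by
  ext c
  exact (and_congr_right'
    (decoComp_map_empty_append_singleton (by simp) R.init c α a F)).trans and_assoc.symm

theorem fcc_empty (R : Resolution L s) (α : List A) : R.fcc α ∅ = R.cc α := by
  simp [fcc]

theorem fcc_univ (R : Resolution L s) (α : List A) : R.fcc α Set.univ = R.ccc α := by
  simp [fcc, ccc, NPLTS.enabled, NPLTS.hasTrans]

theorem cc_nil (R : Resolution L s) : R.cc [] = {[]} := by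
  ext c
  cases c <;> simp [cc, traceOf, NPLTS.IsComp]

theorem fcc_nil (R : Resolution L s) (F : Set A) :
    R.fcc [] F = if ∀ f ∈ F, f ∉ L.enabled s then {[]} else ∅ := by
  ext c
  split_ifs with hF <;> simp +contextual [fcc, cc_nil, lastState, R.corr_init, hF]

theorem prob_fcc_nil (R : Resolution L s) (F : Set A) :
    R.prob (R.fcc [] F) = if ∀ f ∈ F, f ∉ L.enabled s then 1 else 0 := by
  rw [fcc_nil]
  split_ifs <;> simp [prob, NPLTS.probSet, NPLTS.compProb]

theorem prob_cc_ne_zero_iff (R : Resolution L s) (α : List A) :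
    R.prob (R.cc α) ≠ 0 ↔ (R.cc α).Nonempty := by
  rw [prob, NPLTS.probSet, ne_eq, ENNReal.tsum_eq_zero, not_forall]
  exact ⟨fun ⟨c, _⟩ => ⟨c, c.2⟩, fun ⟨c, hc⟩ => ⟨⟨c, hc⟩, hc.1.compProb_ne_zero⟩⟩

/-- The resolution that performs a given transition at `s` and stops at every other state.
Its states are `s` and the support of `D`, so that they are countable whatever `S` is; the
restriction of `D` to them is specified by its values. -/
def ofTrans {a : A} {D : PMF S} (h : L.trans s a D) : Resolution L s where
  State := ↥(insert s D.support)
  countable := (D.support_countable.insert s).to_subtype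
  lts := ⟨fun z b E => z.1 = s ∧ b = a ∧ ∀ z', E z' = D z'⟩
  corr := Subtype.val
  init := ⟨s, Set.mem_insert s D.support⟩
  corr_init := rfl
  mimic := by
    rintro z b E ⟨hz, rfl, hE⟩
    exact ⟨D, by rwa [hz], hE⟩
  det := by
    rintro z b₁ b₂ E₁ E₂ ⟨_, rfl, hE₁⟩ ⟨_, rfl, hE₂⟩
    exact ⟨rfl, PMF.ext fun z' => (hE₁ z').trans (hE₂ z').symm⟩

theorem ofTrans_cc_singleton_nonempty {a : A} {D : PMF S} (h : L.trans s a D) :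
    ((ofTrans h).cc [a]).Nonempty := by
  obtain ⟨E, hE⟩ := exists_pmf_subtype_of_support_subset D (Set.subset_insert s D.support)
  obtain ⟨z, hz⟩ := E.support_nonempty
  exact ⟨[(a, z)], ⟨⟨E, ⟨rfl, rfl, hE⟩, hz⟩, trivial⟩, rfl⟩

theorem mem_enabled_of_cc_singleton_nonempty (R : Resolution L s) {a : A}
    (h : (R.cc [a]).Nonempty) : a ∈ L.enabled s := by
  obtain ⟨_ | ⟨⟨b, z⟩, c⟩, hc, htrace⟩ := h
  · simp [traceOf] at htrace
  · obtain ⟨⟨D, hD, -⟩, -⟩ := hc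
    obtain ⟨D', hD', -⟩ := R.mimic _ _ _ hD
    obtain rfl : b = a := (List.cons.inj htrace).1
    rw [R.corr_init] at hD'
    exact ⟨D', hD'⟩

end Resolution

theorem NPLTS.mem_enabled_iff_exists_prob_cc_ne_zero {S A : Type} {L : NPLTS S A} {s : S}
    {a : A} : a ∈ L.enabled s ↔ ∃ R : Resolution L s, R.prob (R.cc [a]) ≠ 0 := by
  simp only [Resolution.prob_cc_ne_zero_iff]
  exact ⟨fun ⟨_, hD⟩ => ⟨_, Resolution.ofTrans_cc_singleton_nonempty hD⟩,
    fun ⟨R, hR⟩ => R.mem_enabled_of_cc_singleton_nonempty hR⟩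

section Inclusions

variable {S A : Type} {L : NPLTS S A} {s₁ s₂ : S}

theorem PTr.symm (h : PTr L s₁ s₂) : PTr L s₂ s₁ := fun α => (h α).symm

theorem PTr.enabled_subset (h : PTr L s₁ s₂) : L.enabled s₁ ⊆ L.enabled s₂ := by
  intro a ha
  rw [NPLTS.mem_enabled_iff_exists_prob_cc_ne_zero] at ha ⊢
  obtain ⟨R₁, hR₁⟩ := ha
  obtain ⟨R₂, hR₂⟩ := (h [a]).1 R₁
  exact ⟨R₂, hR₂ ▸ hR₁⟩

theorem PTr.enabled_eq (h : PTr L s₁ s₂) : L.enabled s₁ = L.enabled s₂ :=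
  h.enabled_subset.antisymm h.symm.enabled_subset

theorem PFTr.ptr (h : PFTr L s₁ s₂) : PTr L s₁ s₂ := fun α => by
  simpa only [Resolution.ftcc_map_empty] using h (α.map (·, ∅))

theorem PFTr.pf (h : PFTr L s₁ s₂) : PF L s₁ s₂ := by
  intro α F
  obtain rfl | ⟨α, a, rfl⟩ := α.eq_nil_or_concat'
  · simp only [Resolution.prob_fcc_nil, h.ptr.enabled_eq]
    -- Both sides are now the same constant, so any resolution of the other state will do.
    exact ⟨fun R₁ => ((h []).1 R₁).imp fun _ _ => trivial,
      fun R₂ => ((h []).2 R₂).imp fun _ _ => trivial⟩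
  · have hφ := h (α.map (·, ∅) ++ [(a, F)])
    simpa only [Resolution.ftcc_map_empty_append_singleton] using hφ

theorem PF.pctr (h : PF L s₁ s₂) : PCTr L s₁ s₂ := by
  intro α
  have trace := h α ∅
  have completed := h α Set.univ
  simp only [Resolution.fcc_empty] at trace
  simp only [Resolution.fcc_univ] at completed
  simp only [exists_and_left, exists_and_right]
  exact ⟨fun R₁ => ⟨trace.1 R₁, completed.1 R₁⟩, fun R₂ => ⟨trace.2 R₂, completed.2 R₂⟩⟩

theorem PCTr.ptr (h : PCTr L s₁ s₂) : PTr L s₁ s₂ := by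
  intro α
  simp only [PCTr, exists_and_left, exists_and_right] at h
  exact ⟨fun R₁ => ((h α).1 R₁).1, fun R₂ => ((h α).2 R₂).1⟩

end Inclusions

theorem single_trace_chain_general {S A : Type} (L : NPLTS S A) (s₁ s₂ : S) :
    (PFTr L s₁ s₂ → PF L s₁ s₂) ∧
    (PF L s₁ s₂ → PCTr L s₁ s₂) ∧
    (PCTr L s₁ s₂ → PTr L s₁ s₂) :=
  ⟨PFTr.pf, PF.pctr, PCTr.ptr⟩

/-- `≈_{PFTr} ⊆ ≈_{PF} ⊆ ≈_{PCTr} ⊆ ≈_{PTr}`. -/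
theorem single_trace_chain
    {S A : Type} [Countable S] [Countable A] (L : NPLTS S A) (s₁ s₂ : S) :
    (PFTr L s₁ s₂ → PF L s₁ s₂) ∧
    (PF L s₁ s₂ → PCTr L s₁ s₂) ∧
    (PCTr L s₁ s₂ → PTr L s₁ s₂) :=
  single_trace_chain_general L s₁ s₂
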